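/- Let d ≥ 1 and let f, g : ℝ^d → [0, ∞) be integrable functions that are radial and nonincreasing in the radius; that is, there exist antitone functions f₀, g₀ : [0, ∞) → [0, ∞) with f(x) = f₀(|x|) and g(x) = g₀(|x|) for all x. Then the convolution (f * g)(x) = ∫_{ℝ^d} f(x − s) g(s) ds is also radial and nonincreasing in the radius: (f * g)(x) depends only on |x|, and |x| ≤ |y| implies (f * g)(x) ≥ (f * g)(y). -/

import Mathlib

open MeasureTheory

/-!
Polarization argument. Let `‖x‖ ≤ ‖y‖` and let `T` be the reflection in the perpendicular bisector
of `x` and `y`. As `T` is a measure-preserving involution exchanging `x` and `y`, the difference of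
the convolution at `x` and at `y` is half the integral of
`(f (x - s) - f (y - s)) * (g s - g (T s))`. The two factors have the same sign: for `s` on the side
of `x`, the first is nonnegative since `s` is closer to `x` than to `y`, and the second because the
origin is on that side too, so that `s` is closer to it than `T s`.
-/

open Set AffineSubspace EuclideanGeometry
open scoped RealInnerProductSpace

section PerpBisector

variable {V P : Type*} [NormedAddCommGroup V] [InnerProductSpace ℝ V] [MetricSpace P]
  [NormedAddTorsor V P]

theorem inner_vsub_midpoint_nonpos_iff_dist_le {x y p : P} :
    ⟪p -ᵥ midpoint ℝ x y, y -ᵥ x⟫ ≤ 0 ↔ dist p x ≤ dist p y := by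
  have h : dist p x ^ 2 - dist p y ^ 2 = 2 * ⟪p -ᵥ midpoint ℝ x y, y -ᵥ x⟫ := by
    rw [dist_eq_norm_vsub V p x, dist_eq_norm_vsub V p y, vsub_midpoint,
      ← vsub_sub_vsub_cancel_left y x p, invOf_eq_inv, ← smul_add, real_inner_smul_left,
      inner_add_left, inner_sub_right, inner_sub_right, real_inner_self_eq_norm_sq,
      real_inner_self_eq_norm_sq, real_inner_comm (p -ᵥ x)]
    ring
  rw [← sq_le_sq₀ dist_nonneg dist_nonneg, ← sub_nonpos (b := dist p y ^ 2), h]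
  constructor <;> intro <;> linarith

instance nonempty_perpBisector (x y : P) : Nonempty (perpBisector x y) :=
  perpBisector_nonempty.to_subtype

instance hasOrthogonalProjection_direction_perpBisector (x y : P) :
    (perpBisector x y).direction.HasOrthogonalProjection := by
  rw [direction_perpBisector]
  infer_instance

theorem reflection_perpBisector_apply (x y p : P) :
    reflection (perpBisector x y) p =
      -(2 * (⟪p -ᵥ midpoint ℝ x y, y -ᵥ x⟫ / ‖y -ᵥ x‖ ^ 2)) • (y -ᵥ x) +ᵥ p := by
  rw [reflection_apply_of_mem _ _ (midpoint_mem_perpBisector x y)]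
  simp only [direction_perpBisector, Submodule.reflection_orthogonal_apply,
    Submodule.reflection_singleton_apply, RCLike.ofReal_real_eq_id, id_eq]
  rw [← vsub_left_cancel_iff (p := midpoint ℝ x y), vadd_vsub, vadd_vsub_assoc, real_inner_comm]
  module

theorem reflection_perpBisector_left (x y : P) : reflection (perpBisector x y) x = y := by
  have hdir : x -ᵥ midpoint ℝ x y ∈ (perpBisector x y).directionᗮ := by
    rw [direction_perpBisector, left_vsub_midpoint, ← neg_vsub_eq_vsub_rev y x]
    exact Submodule.le_orthogonal_orthogonal _
      (Submodule.smul_mem _ _ (neg_mem (Submodule.mem_span_singleton_self _)))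
  have h := reflection_orthogonal_vadd (midpoint_mem_perpBisector x y) hdir
  rwa [vsub_vadd, neg_vsub_eq_vsub_rev, midpoint_vsub_left, ← right_vsub_midpoint,
    vsub_vadd] at h

theorem dist_reflection_perpBisector_left (x y p : P) :
    dist (reflection (perpBisector x y) p) x = dist p y := by
  rw [← dist_reflection, reflection_perpBisector_left]

theorem dist_reflection_perpBisector_right (x y p : P) :
    dist (reflection (perpBisector x y) p) y = dist p x := by
  rw [← dist_reflection_perpBisector_left, reflection_reflection]

theorem dist_le_dist_reflection_perpBisector {x y p s : P} (hp : dist p x ≤ dist p y)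
    (hs : dist s x ≤ dist s y) : dist p s ≤ dist p (reflection (perpBisector x y) s) := by
  rw [← inner_vsub_midpoint_nonpos_iff_dist_le] at hp hs
  set m := midpoint ℝ x y
  set v := y -ᵥ x
  set t := -(2 * (⟪s -ᵥ m, v⟫ / ‖v‖ ^ 2)) with ht_def
  have ht : 0 ≤ t := by
    have := div_nonpos_of_nonpos_of_nonneg hs (sq_nonneg ‖v‖)
    linarith
  have htv : t * ‖v‖ ^ 2 = -2 * ⟪s -ᵥ m, v⟫ := by
    rcases eq_or_ne v 0 with hv | hv
    · simp [hv]
    · have : ‖v‖ ≠ 0 := norm_ne_zero_iff.2 hv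
      rw [ht_def]
      field_simp
  have hsplit : ⟪p -ᵥ s, v⟫ = ⟪p -ᵥ m, v⟫ - ⟪s -ᵥ m, v⟫ := by
    rw [← inner_sub_left, vsub_sub_vsub_cancel_right]
  have hdist : dist p (t • v +ᵥ s) ^ 2 = dist p s ^ 2 - 2 * t * ⟪p -ᵥ m, v⟫ := by
    rw [dist_eq_norm_vsub V, dist_eq_norm_vsub V, vsub_vadd_eq_vsub_sub, norm_sub_sq_real,
      real_inner_smul_right, norm_smul, mul_pow, Real.norm_eq_abs, sq_abs]
    linear_combination t * htv - 2 * t * hsplit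
  rw [reflection_perpBisector_apply, ← sq_le_sq₀ dist_nonneg dist_nonneg, hdist]
  linarith [mul_nonpos_of_nonneg_of_nonpos ht hp]

end PerpBisector

section MeasurePreserving

theorem measurePreserving_isometryEquiv_addHaar {E : Type*} [NormedAddCommGroup E]
    [NormedSpace ℝ E] [FiniteDimensional ℝ E] [MeasurableSpace E] [BorelSpace E]
    (μ : Measure E) [μ.IsAddHaarMeasure] (e : E ≃ᵢ E) : MeasurePreserving e μ μ := by
  rw [Measure.isAddLeftInvariant_eq_smul μ μH[Module.finrank ℝ E]]
  exact (e.measurePreserving_hausdorffMeasure _).smul_measure _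

theorem integral_comp_mul_le_integral_mul_of_involutive {α : Type*} [MeasurableSpace α]
    {μ : Measure α} {T : α → α} (hT : MeasurePreserving T μ μ) (hinv : T.Involutive)
    {F G : α → ℝ} (hFG : Integrable (fun s ↦ F s * G s) μ)
    (hFTG : Integrable (fun s ↦ F (T s) * G s) μ)
    (hpos : ∀ᵐ s ∂μ, 0 ≤ (F s - F (T s)) * (G s - G (T s))) :
    ∫ s, F (T s) * G s ∂μ ≤ ∫ s, F s * G s ∂μ := by
  have hemb : MeasurableEmbedding T :=
    (MeasurableEquiv.ofInvolutive T hinv hT.measurable).measurableEmbedding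
  have hintegral : ∫ s, (F s - F (T s)) * (G s - G (T s)) ∂μ =
      2 * (∫ s, F s * G s ∂μ - ∫ s, F (T s) * G s ∂μ) := by
    have hFG' : Integrable (fun s ↦ F (T s) * G (T s)) μ := hT.integrable_comp_of_integrable hFG
    have hFTG' : Integrable (fun s ↦ F s * G (T s)) μ := by
      simpa only [Function.comp_def, hinv _] using hT.integrable_comp_of_integrable hFTG
    calc ∫ s, (F s - F (T s)) * (G s - G (T s)) ∂μ
      _ = ∫ s, (F s * G s - F (T s) * G s) + (F (T s) * G (T s) - F s * G (T s)) ∂μ := by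
        congr with s
        ring
      _ = (∫ s, F s * G s ∂μ - ∫ s, F (T s) * G s ∂μ) +
          (∫ s, F (T s) * G (T s) ∂μ - ∫ s, F s * G (T s) ∂μ) := by
        rw [integral_add (hFG.sub' hFTG) (hFG'.sub' hFTG'), integral_sub hFG hFTG,
          integral_sub hFG' hFTG']
      _ = 2 * (∫ s, F s * G s ∂μ - ∫ s, F (T s) * G s ∂μ) := by
        have h := hT.integral_comp hemb fun s ↦ F s * G s
        have h' := hT.integral_comp hemb fun s ↦ F (T s) * G s
        simp only [hinv _] at h'
        rw [h, h', two_mul]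
  linarith [integral_nonneg_of_ae hpos]

end MeasurePreserving

/-- A function on a normed space is radially antitone if it is radial and nonincreasing in the
radius. Taking `‖x‖ = ‖y‖` in the inequality already gives radiality, so no profile `f₀` is
carried along. -/
def RadiallyAntitone {E β : Type*} [Norm E] [LE β] (f : E → β) : Prop :=
  ∀ ⦃x y⦄, ‖x‖ ≤ ‖y‖ → f y ≤ f x

namespace RadiallyAntitone

theorem of_antitoneOn {E β : Type*} [SeminormedAddGroup E] [Preorder β] {f : E → β} {f₀ : ℝ → β}
    (hf₀ : AntitoneOn f₀ (Ici 0)) (hf : ∀ x, f x = f₀ ‖x‖) : RadiallyAntitone f := by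
  intro x y hxy
  rw [hf, hf]
  exact hf₀ (norm_nonneg x) (norm_nonneg y) hxy

theorem eq_of_norm_eq {E β : Type*} [Norm E] [PartialOrder β] {f : E → β}
    (hf : RadiallyAntitone f) {x y : E} (hxy : ‖x‖ = ‖y‖) : f x = f y :=
  le_antisymm (hf hxy.ge) (hf hxy.le)

theorem measurable {E : Type*} [SeminormedAddGroup E] [MeasurableSpace E] [OpensMeasurableSpace E]
    {f : E → ℝ} (hf : RadiallyAntitone f) : Measurable f := by
  refine measurable_of_Ici fun a ↦ ?_
  let radii : Set ℝ := {r | ∃ x, a ≤ f x ∧ r ≤ ‖x‖}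
  have hradii : IsLowerSet radii := fun r r' hr ⟨x, hx, hrx⟩ ↦ ⟨x, hx, hr.trans hrx⟩
  have hpreimage : f ⁻¹' Ici a = norm ⁻¹' radii :=
    Set.ext fun x ↦ ⟨fun hx ↦ ⟨x, hx, le_rfl⟩, fun ⟨_, hz, hxz⟩ ↦ hz.trans (hf hxz)⟩
  rw [hpreimage]
  exact continuous_norm.measurable hradii.ordConnected.measurableSet

theorem integrable_comp_sub_mul {E : Type*} [SeminormedAddCommGroup E] [MeasurableSpace E]
    [BorelSpace E] {μ : Measure E} {f g : E → ℝ} (hf : RadiallyAntitone f)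
    (hbdd : BddBelow (range f)) (hg : Integrable g μ) (x : E) :
    Integrable (fun s ↦ f (x - s) * g s) μ := by
  obtain ⟨c, hc⟩ := hbdd
  have hmeas : Measurable fun s ↦ f (x - s) := hf.measurable.comp (measurable_const_sub x)
  refine hg.bdd_mul (c := max |c| |f 0|) hmeas.aestronglyMeasurable (.of_forall fun s ↦ ?_)
  exact abs_le_max_abs_abs (hc (mem_range_self _)) (hf (by simp))

theorem comp_sub_reflection {E β : Type*} [NormedAddCommGroup E] [InnerProductSpace ℝ E]
    [PartialOrder β] {f : E → β} (hf : RadiallyAntitone f) (x y s : E) :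
    f (x - reflection (perpBisector x y) s) = f (y - s) := by
  apply hf.eq_of_norm_eq
  rw [← dist_eq_norm', ← dist_eq_norm', dist_reflection_perpBisector_left]

theorem sub_mul_sub_reflection_nonneg {E : Type*} [NormedAddCommGroup E] [InnerProductSpace ℝ E]
    {f g : E → ℝ} (hf : RadiallyAntitone f) (hg : RadiallyAntitone g) {x y : E}
    (hxy : ‖x‖ ≤ ‖y‖) (s : E) :
    0 ≤ (f (x - s) - f (y - s)) * (g s - g (reflection (perpBisector x y) s)) := by
  set T := reflection (perpBisector x y)
  have hxy' : dist 0 x ≤ dist 0 y := by rwa [dist_zero_left, dist_zero_left]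
  have hle {u : E} (hu : dist u x ≤ dist u y) : ‖u‖ ≤ ‖T u‖ := by
    simpa only [dist_zero_left] using dist_le_dist_reflection_perpBisector hxy' hu
  rcases le_total (dist s x) (dist s y) with hs | hs
  · have hfs : f (y - s) ≤ f (x - s) := hf (by rwa [← dist_eq_norm', ← dist_eq_norm'])
    exact mul_nonneg (sub_nonneg.2 hfs) (sub_nonneg.2 (hg (hle hs)))
  · have hfs : f (x - s) ≤ f (y - s) := hf (by rwa [← dist_eq_norm', ← dist_eq_norm'])
    have hTs : dist (T s) x ≤ dist (T s) y := by
      rwa [dist_reflection_perpBisector_left, dist_reflection_perpBisector_right]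
    have hgs : g s ≤ g (T s) := hg (by simpa only [T, reflection_reflection] using hle hTs)
    exact mul_nonneg_of_nonpos_of_nonpos (sub_nonpos.2 hfs) (sub_nonpos.2 hgs)

end RadiallyAntitone

theorem convolution_of_radial_decreasing_is_radial_decreasing_general {E : Type*}
    [NormedAddCommGroup E] [InnerProductSpace ℝ E] [FiniteDimensional ℝ E] [MeasurableSpace E]
    [BorelSpace E] (μ : Measure E) [μ.IsAddHaarMeasure] {f g : E → ℝ} (hf : RadiallyAntitone f)
    (hg : RadiallyAntitone g) (hfg : ∀ x, Integrable (fun s ↦ f (x - s) * g s) μ) :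
    RadiallyAntitone fun x ↦ ∫ s, f (x - s) * g s ∂μ := by
  intro x y hxy
  let T : E ≃ᵃⁱ[ℝ] E := reflection (perpBisector x y)
  have hswap : ∀ s, f (x - T s) = f (y - s) := hf.comp_sub_reflection x y
  have hT : MeasurePreserving T μ μ := measurePreserving_isometryEquiv_addHaar μ T.toIsometryEquiv
  have hpos : ∀ s, 0 ≤ (f (x - s) - f (x - T s)) * (g s - g (T s)) := by
    simpa only [hswap] using hf.sub_mul_sub_reflection_nonneg hg hxy
  simpa only [hswap] using integral_comp_mul_le_integral_mul_of_involutive hT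
    (reflection_involutive _) (hfg x) (by simpa only [hswap] using hfg y) (.of_forall hpos)

theorem convolution_of_radial_decreasing_is_radial_decreasing (d : ℕ) (hd : 1 ≤ d)
    (f g : EuclideanSpace ℝ (Fin d) → ℝ)
    (hfint : Integrable f) (hgint : Integrable g)
    (hf0 : ∀ x, 0 ≤ f x) (hg0 : ∀ x, 0 ≤ g x)
    (f₀ g₀ : ℝ → ℝ)
    (hf₀ : AntitoneOn f₀ (Set.Ici 0)) (hg₀ : AntitoneOn g₀ (Set.Ici 0))
    (hfr : ∀ x, f x = f₀ ‖x‖) (hgr : ∀ x, g x = g₀ ‖x‖) :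
    (∀ x y : EuclideanSpace ℝ (Fin d), ‖x‖ = ‖y‖ →
      (∫ s, f (x - s) * g s) = ∫ s, f (y - s) * g s) ∧
    (∀ x y : EuclideanSpace ℝ (Fin d), ‖x‖ ≤ ‖y‖ →
      (∫ s, f (y - s) * g s) ≤ ∫ s, f (x - s) * g s) := by
  have hf : RadiallyAntitone f := .of_antitoneOn hf₀ hfr
  have hfg := convolution_of_radial_decreasing_is_radial_decreasing_general volume hf
    (.of_antitoneOn hg₀ hgr) (hf.integrable_comp_sub_mul ⟨0, forall_mem_range.2 hf0⟩ hgint)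
  exact ⟨fun _ _ h ↦ hfg.eq_of_norm_eq h, fun _ _ h ↦ hfg h⟩
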